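/- Every geodesic Ptolemy metric space is distance convex: for every point p ∈ X and every geodesic c : I → X, the function t ↦ |p c(t)| is convex. -/

import Mathlib

/-! For a point `c m` with `m = a s + b t`, apply the Ptolemy inequality to the quadruple
`p, c m, c s, c t`. On a geodesic, `|c m c t| = a |c s c t|` and `|c m c s| = b |c s c t|`, so
the inequality is the convexity inequality multiplied by `|c s c t|`. -/

/-- A metric space is Ptolemy if `|xy|·|uv| ≤ |xu|·|yv| + |xv|·|yu|` for all points. -/
def IsPtolemy (X : Type*) [MetricSpace X] : Prop :=
  ∀ x y u v : X, dist x y * dist u v ≤ dist x u * dist y v + dist x v * dist y u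

/-- `c` is a geodesic on `I` (parameterized proportionally to arclength with speed `l ≥ 0`). -/
def IsGeodesicOn {X : Type*} [MetricSpace X] (c : ℝ → X) (I : Set ℝ) : Prop :=
  ∃ l : ℝ, 0 ≤ l ∧ ∀ s ∈ I, ∀ t ∈ I, dist (c s) (c t) = l * |s - t|

/-- A metric space is geodesic if every pair of points is joined by a geodesic. -/
def IsGeodesicSpace (X : Type*) [MetricSpace X] : Prop :=
  ∀ x y : X, ∃ c : ℝ → X, c 0 = x ∧ c 1 = y ∧ IsGeodesicOn c (Set.Icc 0 1)

/-- **Lemma 2.1.** A geodesic Ptolemy metric space is distance convex: for every point `p`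
and every geodesic `c : I → X`, the function `t ↦ |p c(t)|` is convex on `I`. -/
theorem geodesic_ptolemy_distance_convex
    {X : Type*} [MetricSpace X]
    (hgeo : IsGeodesicSpace X) (hpt : IsPtolemy X)
    (p : X) (c : ℝ → X) (I : Set ℝ) (hI : Convex ℝ I)
    (hc : IsGeodesicOn c I) :
    ConvexOn ℝ I (fun t => dist p (c t)) := by
  obtain ⟨l, hl, hd⟩ := hc
  refine ⟨hI, fun s hs t ht a b ha hb hab => ?_⟩
  have hm : a • s + b • t ∈ I := hI hs ht ha hb hab
  have h := hpt p (c (a • s + b • t)) (c s) (c t)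
  have h1 : dist (c (a • s + b • t)) (c t) = a * (l * |s - t|) := by
    have e : a • s + b • t - t = a * (s - t) := by
      simp only [smul_eq_mul]; linear_combination t * hab
    rw [hd _ hm _ ht, e, abs_mul, abs_of_nonneg ha]; ring
  have h2 : dist (c (a • s + b • t)) (c s) = b * (l * |s - t|) := by
    have e : a • s + b • t - s = b * (t - s) := by
      simp only [smul_eq_mul]; linear_combination s * hab
    rw [hd _ hm _ hs, e, abs_mul, abs_of_nonneg hb, abs_sub_comm t s]; ring
  rw [h1, h2, hd s hs t ht] at h
  simp only [smul_eq_mul] at *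
  have hL : 0 ≤ l * |s - t| := by positivity
  rcases hL.eq_or_lt with h0 | hpos
  · -- Degenerate case: the three points on the geodesic coincide.
    rw [← h0, mul_zero] at h1 h2
    rw [dist_eq_zero] at h1 h2
    have hst : c s = c t := h2.symm.trans h1
    rw [h1, hst, ← add_mul, hab, one_mul]
  · refine le_of_mul_le_mul_right ?_ hpos
    linarith
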